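/- Let u : A → B be a morphism of noetherian rings, M a finitely generated A-module, and N a finitely generated B-module which is flat as an A-module. Consider M ⊗_A N as a B-module. If M is a Cohen-Macaulay A-module and for every P ∈ Supp(M) the fiber module N_P/PN_P is an almost Cohen-Macaulay B_P/PB_P-module, then M ⊗_A N is an almost Cohen-Macaulay B-module. -/

import Mathlib

noncomputable section

open TensorProduct

universe u v w





/-- The depth of the ideal `I` on the module `M`: the supremum of lengths of
`M`-regular sequences with entries in `I`. -/
noncomputable def idealDepth (A : Type u) [CommRing A] (I : Ideal A)
    (M : Type v) [AddCommGroup M] [Module A M] : ℕ∞ :=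
  sSup {n : ℕ∞ | ∃ rs : List A, (rs.length : ℕ∞) = n ∧ (∀ r ∈ rs, r ∈ I) ∧
    RingTheory.Sequence.IsRegular M rs}

/-- The depth of a module over a local ring. -/
noncomputable def localDepth (A : Type u) [CommRing A] [IsLocalRing A]
    (M : Type v) [AddCommGroup M] [Module A M] : ℕ∞ :=
  idealDepth A (IsLocalRing.maximalIdeal A) M

/-- The (Krull) dimension of a module, i.e. the Krull dimension of its support. -/
noncomputable def supportDim (A : Type u) [CommRing A]
    (M : Type v) [AddCommGroup M] [Module A M] : WithBot ℕ∞ :=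
  Order.krullDim (Module.support A M)

/-- `depth (M_P)` : the depth of the localization of `M` at a prime `P`,
over the local ring `A_P`. -/
noncomputable def depthAt (A : Type u) [CommRing A]
    (M : Type v) [AddCommGroup M] [Module A M] (P : PrimeSpectrum A) : ℕ∞ :=
  localDepth (Localization.AtPrime P.asIdeal) (LocalizedModule P.asIdeal.primeCompl M)

/-- `ht_M(P) = dim (M_P)` : the height of a prime `P` in the support of `M`,
i.e. the dimension of the localized module `M_P` over `A_P`. -/
noncomputable def heightAt (A : Type u) [CommRing A]
    (M : Type v) [AddCommGroup M] [Module A M] (P : PrimeSpectrum A) : WithBot ℕ∞ :=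
  supportDim (Localization.AtPrime P.asIdeal) (LocalizedModule P.asIdeal.primeCompl M)

/-- Serre's condition `(S_n)` for a module: for every `P` in the support,
`depth (M_P) ≥ min (n, ht_M(P))`. -/
def SerreCondS (A : Type u) [CommRing A] (n : ℕ)
    (M : Type v) [AddCommGroup M] [Module A M] : Prop :=
  ∀ P ∈ Module.support A M,
    min (n : WithBot ℕ∞) (heightAt A M P) ≤ (depthAt A M P : WithBot ℕ∞)

/-- The condition `(C_n)` for a module: for every `P` in the support,
`depth (M_P) ≥ min (n, ht_M(P)) - 1`, equivalently
`min (n, ht_M(P)) ≤ depth (M_P) + 1`. -/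
def CondC (A : Type u) [CommRing A] (n : ℕ)
    (M : Type v) [AddCommGroup M] [Module A M] : Prop :=
  ∀ P ∈ Module.support A M,
    min (n : WithBot ℕ∞) (heightAt A M P) ≤ (depthAt A M P : WithBot ℕ∞) + 1

/-- A module `M` is almost Cohen-Macaulay if `depth(P, M) = depth (M_P)` for every
`P` in the support of `M` (Kang's definition). -/
def IsAlmostCMModule (A : Type u) [CommRing A]
    (M : Type v) [AddCommGroup M] [Module A M] : Prop :=
  ∀ P ∈ Module.support A M, idealDepth A P.asIdeal M = depthAt A M P

/-- A module `M` is Cohen-Macaulay if `depth (M_P) = dim (M_P)` for every `P` in its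
support. -/
def IsCMModule (A : Type u) [CommRing A]
    (M : Type v) [AddCommGroup M] [Module A M] : Prop :=
  ∀ P ∈ Module.support A M, (depthAt A M P : WithBot ℕ∞) = heightAt A M P

/-- A ring is almost Cohen-Macaulay if it is an almost Cohen-Macaulay module over
itself. -/
abbrev IsAlmostCMRing (A : Type u) [CommRing A] : Prop := IsAlmostCMModule A A

/-- A ring is Cohen-Macaulay if it is a Cohen-Macaulay module over itself, i.e. all its
localizations at primes have depth equal to dimension. -/
abbrev IsCMRing (A : Type u) [CommRing A] : Prop := IsCMModule A A

/-- A ring satisfies `(C_n)` if it does so as a module over itself. -/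
abbrev RingCondC (A : Type u) [CommRing A] (n : ℕ) : Prop := CondC A n A

/-- A ring satisfies `(S_n)` if it does so as a module over itself. -/
abbrev RingSerreCondS (A : Type u) [CommRing A] (n : ℕ) : Prop := SerreCondS A n A






variable (A : Type u) [CommRing A] (B : Type u) [CommRing B] [Algebra A B]

/-- The image in `B` of the complement of a prime `P` of `A`, as a submonoid of `B`. -/
noncomputable def fiberSubmonoid (P : PrimeSpectrum A) : Submonoid B :=
  Submonoid.map (algebraMap A B) P.asIdeal.primeCompl

/-- `PB_P` : the extension of the prime `P` of `A` to the localization `B_P` of `B`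
at (the image of) the complement of `P`. -/
noncomputable def fiberIdeal (P : PrimeSpectrum A) :
    Ideal (Localization (fiberSubmonoid A B P)) :=
  Ideal.map ((algebraMap B (Localization (fiberSubmonoid A B P))).comp (algebraMap A B))
    P.asIdeal

/-- The fiber ring `B_P / P B_P` of `A → B` at a prime `P` of `A`. -/
noncomputable def fiberRing (P : PrimeSpectrum A) : Type u :=
  Localization (fiberSubmonoid A B P) ⧸ fiberIdeal A B P

noncomputable instance (P : PrimeSpectrum A) : CommRing (fiberRing A B P) :=
  inferInstanceAs (CommRing (Localization (fiberSubmonoid A B P) ⧸ fiberIdeal A B P))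

/-- The fiber module `N_P / P N_P` of a `B`-module `N` at a prime `P` of `A`. -/
noncomputable def fiberModule (P : PrimeSpectrum A)
    (N : Type u) [AddCommGroup N] [Module B N] : Type u :=
  LocalizedModule (fiberSubmonoid A B P) N ⧸
    (fiberIdeal A B P •
      (⊤ : Submodule (Localization (fiberSubmonoid A B P))
        (LocalizedModule (fiberSubmonoid A B P) N)))

noncomputable instance (P : PrimeSpectrum A) (N : Type u) [AddCommGroup N] [Module B N] :
    AddCommGroup (fiberModule A B P N) :=
  inferInstanceAs (AddCommGroup (LocalizedModule (fiberSubmonoid A B P) N ⧸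
    (fiberIdeal A B P •
      (⊤ : Submodule (Localization (fiberSubmonoid A B P))
        (LocalizedModule (fiberSubmonoid A B P) N)))))

/-- `N_P / P N_P` is a module over the fiber ring `B_P / P B_P`. -/
noncomputable instance (P : PrimeSpectrum A) (N : Type u) [AddCommGroup N] [Module B N] :
    Module (fiberRing A B P) (fiberModule A B P N) :=
  inferInstanceAs (Module (Localization (fiberSubmonoid A B P) ⧸ fiberIdeal A B P)
    (LocalizedModule (fiberSubmonoid A B P) N ⧸
      (fiberIdeal A B P •
        (⊤ : Submodule (Localization (fiberSubmonoid A B P))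
          (LocalizedModule (fiberSubmonoid A B P) N)))))








/-- The canonical `B`-module structure on `M ⊗[A] N`, where `N` is a `B`-module,
given by `b • (m ⊗ n) = m ⊗ (b • n)`. -/
noncomputable instance tensorRightModule (A : Type u) [CommRing A] (B : Type u) [CommRing B]
    [Algebra A B] (M : Type u) [AddCommGroup M] [Module A M]
    (N : Type u) [AddCommGroup N] [Module A N] [Module B N] [IsScalarTower A B N] :
    Module B (M ⊗[A] N) where
  smul b x := (TensorProduct.comm A M N).symm (b • TensorProduct.comm A M N x)
  one_smul x := by
    show (TensorProduct.comm A M N).symm ((1 : B) • TensorProduct.comm A M N x) = x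
    simp
  mul_smul a b x := by
    show (TensorProduct.comm A M N).symm ((a * b) • TensorProduct.comm A M N x) =
      (TensorProduct.comm A M N).symm (a • TensorProduct.comm A M N
        ((TensorProduct.comm A M N).symm (b • TensorProduct.comm A M N x)))
    simp [mul_smul]
  smul_zero b := by
    show (TensorProduct.comm A M N).symm (b • TensorProduct.comm A M N 0) = 0
    simp
  smul_add b x y := by
    show (TensorProduct.comm A M N).symm (b • TensorProduct.comm A M N (x + y)) =
      (TensorProduct.comm A M N).symm (b • TensorProduct.comm A M N x) +
      (TensorProduct.comm A M N).symm (b • TensorProduct.comm A M N y)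
    simp
  add_smul a b x := by
    show (TensorProduct.comm A M N).symm ((a + b) • TensorProduct.comm A M N x) =
      (TensorProduct.comm A M N).symm (a • TensorProduct.comm A M N x) +
      (TensorProduct.comm A M N).symm (b • TensorProduct.comm A M N x)
    simp [add_smul]
  zero_smul x := by
    show (TensorProduct.comm A M N).symm ((0 : B) • TensorProduct.comm A M N x) = 0
    simp

/-!
A finitely generated module is almost Cohen–Macaulay exactly when `dim M_Q ≤ depth M_Q + 1` for all
primes `Q`. To check this for `N ⊗ M` at a prime `Q` of `B` lying over `P`, choose a maximal
`M_P`-regular sequence `rs` in `A_P`. By flatness `rs` is regular on `N_Q ⊗ M_P`, so it suffices to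
consider `N_Q ⊗ (M_P / rs M_P)`; since `M_P` is Cohen–Macaulay, `M_P / rs M_P` has finite length.
Filtering it by copies of the residue field shows that the tensor product has at most the dimension
and at least the depth of the fiber `N_Q / P N_Q`, a localization of `N_P / P N_P`.
-/

section Depth

open RingTheory.Sequence IsLocalRing

variable {R : Type u} [CommRing R] {M : Type v} [AddCommGroup M] [Module R M] {I J : Ideal R}

lemma length_le_idealDepth {rs : List R} (hmem : ∀ r ∈ rs, r ∈ I) (hrs : IsRegular M rs) :
    (rs.length : ℕ∞) ≤ idealDepth R I M :=
  le_sSup ⟨rs, rfl, hmem, hrs⟩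

lemma idealDepth_mono (h : I ≤ J) : idealDepth R I M ≤ idealDepth R J M :=
  sSup_le_sSup fun _ ⟨rs, hn, hmem, hrs⟩ => ⟨rs, hn, fun r hr => h (hmem r hr), hrs⟩

lemma isRegular_take {rs : List R} (hrs : IsRegular M rs) (n : ℕ) : IsRegular M (rs.take n) := by
  have h := hrs.toIsWeaklyRegular
  rw [← rs.take_append_drop n, isWeaklyRegular_append_iff] at h
  refine ⟨h.1, fun htop => hrs.top_ne_smul (top_le_iff.mp (htop.le.trans ?_)).symm⟩
  exact Submodule.smul_mono_left (Ideal.span_mono fun r hr => List.mem_of_mem_take hr)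

lemma exists_isRegular_of_le_idealDepth [Nontrivial M] {n : ℕ}
    (h : (n : ℕ∞) ≤ idealDepth R I M) :
    ∃ rs : List R, rs.length = n ∧ (∀ r ∈ rs, r ∈ I) ∧ IsRegular M rs := by
  rcases n with _ | n
  · exact ⟨[], rfl, by simp, .nil R M⟩
  · have hlt : (n : ℕ∞) < idealDepth R I M := lt_of_lt_of_le (by exact_mod_cast n.lt_succ_self) h
    obtain ⟨_, ⟨rs, rfl, hmem, hrs⟩, hlen⟩ := lt_sSup_iff.mp hlt
    have hlen : n < rs.length := by exact_mod_cast hlen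
    exact ⟨rs.take (n + 1), by simp; omega, fun r hr => hmem r (List.mem_of_mem_take hr),
      isRegular_take hrs _⟩

lemma exists_isRegular_length_eq_idealDepth [Nontrivial M] (h : idealDepth R I M ≠ ⊤) :
    ∃ rs : List R, (rs.length : ℕ∞) = idealDepth R I M ∧ (∀ r ∈ rs, r ∈ I) ∧ IsRegular M rs := by
  obtain ⟨n, hn⟩ := ENat.ne_top_iff_exists.mp h
  obtain ⟨rs, rfl, hrs⟩ := exists_isRegular_of_le_idealDepth hn.le
  exact ⟨rs, hn, hrs⟩

lemma length_lt_idealDepth (hI : I • (⊤ : Submodule R M) ≠ ⊤) {rs : List R}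
    (hrs : IsWeaklyRegular M rs) (hmem : ∀ r ∈ rs, r ∈ I) {y : R} (hy : y ∈ I)
    (hreg : IsSMulRegular (M ⧸ (Ideal.ofList rs • ⊤ : Submodule R M)) y) :
    (rs.length : ℕ∞) < idealDepth R I M := by
  have hmem' : ∀ r ∈ rs ++ [y], r ∈ I := by simpa [or_imp, forall_and] using ⟨hmem, hy⟩
  have hweak : IsWeaklyRegular M (rs ++ [y]) :=
    (isWeaklyRegular_append_iff M rs [y]).mpr ⟨hrs, (isWeaklyRegular_singleton_iff _ y).mpr hreg⟩
  have htop : Ideal.ofList (rs ++ [y]) • (⊤ : Submodule R M) ≠ ⊤ := fun h =>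
    hI (top_le_iff.mp (h.ge.trans (Submodule.smul_mono_left (Ideal.span_le.mpr hmem'))))
  have hlen := length_le_idealDepth hmem' ⟨hweak, htop.symm⟩
  rw [List.length_append, List.length_singleton, Nat.cast_add, Nat.cast_one] at hlen
  exact (ENat.add_one_le_iff (ENat.natCast_ne_top _)).mp hlen

variable {F G : Type*} [AddCommGroup F] [Module R F] [AddCommGroup G] [Module R G]

lemma idealDepth_congr (e : F ≃ₗ[R] G) (I : Ideal R) : idealDepth R I F = idealDepth R I G := by
  simp only [idealDepth, e.isRegular_congr]

lemma localDepth_congr [IsLocalRing R] (e : F ≃ₗ[R] G) : localDepth R F = localDepth R G :=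
  idealDepth_congr e _

lemma supportDim_congr (e : F ≃ₗ[R] G) : supportDim R F = supportDim R G :=
  Module.supportDim_eq_of_equiv e

end Depth

section LocalDepth

open RingTheory.Sequence IsLocalRing CategoryTheory

variable {R : Type u} [CommRing R] [IsLocalRing R]

lemma maximalIdeal_smul_top_lt_top (M : Type v) [AddCommGroup M] [Module R M] [Module.Finite R M]
    [Nontrivial M] : maximalIdeal R • (⊤ : Submodule R M) < ⊤ :=
  lt_top_iff_ne_top.mpr (Submodule.top_ne_ideal_smul_of_le_jacobson_annihilator
    (maximalIdeal_le_jacobson _)).symm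

variable [IsNoetherianRing R]

lemma localDepth_le_supportDim (M : Type v) [AddCommGroup M] [Module R M] [Module.Finite R M]
    [Nontrivial M] : (localDepth R M : WithBot ℕ∞) ≤ supportDim R M := by
  obtain ⟨d, hd⟩ := WithBot.ne_bot_iff_exists.mp (Module.supportDim_ne_bot_of_nontrivial R M)
  change _ ≤ Module.supportDim R M
  rw [← hd, WithBot.coe_le_coe]
  refine sSup_le ?_
  rintro _ ⟨rs, rfl, -, hrs⟩
  have := hrs.quot_ofList_smul_nontrivial ⊤
  obtain ⟨e, he⟩ := WithBot.ne_bot_iff_exists.mp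
    (Module.supportDim_ne_bot_of_nontrivial R (M ⧸ Ideal.ofList rs • (⊤ : Submodule R M)))
  have hdim := Module.supportDim_add_length_eq_supportDim_of_isRegular rs hrs
  rw [← hd, ← he] at hdim
  have hdim : e + rs.length = d := by exact_mod_cast hdim
  exact hdim ▸ le_add_self

lemma localDepth_ne_top (M : Type v) [AddCommGroup M] [Module R M] [Module.Finite R M]
    [Nontrivial M] : localDepth R M ≠ ⊤ := by
  intro htop
  have hle : (localDepth R M : WithBot ℕ∞) ≤ ringKrullDim R :=
    (localDepth_le_supportDim M).trans (Module.supportDim_le_ringKrullDim R M)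
  exact (htop ▸ hle).not_gt ringKrullDim_lt_top

variable {M : Type u} [AddCommGroup M] [Module R M] [Module.Finite R M] [Nontrivial M]

/- Rees: the depth is at least `n` iff `Ext^i(k, M) = 0` for all `i < n`, and the long exact
sequence of `0 → M → M → M / xM → 0` shifts this vanishing by one. -/
lemma le_localDepth_quotSMulTop {x : R} (hx : x ∈ maximalIdeal R) (hreg : IsSMulRegular M x)
    {n : ℕ} (h : ((n + 1 : ℕ) : ℕ∞) ≤ localDepth R M) :
    (n : ℕ∞) ≤ localDepth R (QuotSMulTop x M) := by
  have : Nontrivial (QuotSMulTop x M) := nontrivial_quotSMulTop_of_mem_maximalIdeal _ hx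
  have hvanish := ((ModuleCat.exists_isRegular_tfae (maximalIdeal R) (n + 1) (ModuleCat.of R M)
    (maximalIdeal_smul_top_lt_top M)).out 3 1).mp (exists_isRegular_of_le_idealDepth h)
  obtain ⟨rs, rfl, hmem, hrs⟩ := ((ModuleCat.exists_isRegular_tfae (maximalIdeal R) n
    (ModuleCat.of R (QuotSMulTop x M)) (maximalIdeal_smul_top_lt_top (QuotSMulTop x M))).out
      1 3).mp fun i hi => by
    have hzero := AddCommGrpCat.isZero_of_iff_subsingleton.mpr (hvanish i (by omega))
    have hzero' := AddCommGrpCat.isZero_of_iff_subsingleton.mpr (hvanish (i + 1) (by omega))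
    exact AddCommGrpCat.subsingleton_of_isZero <| ShortComplex.Exact.isZero_of_both_zeros
      ((Abelian.Ext.covariant_sequence_exact₃' _
        (IsSMulRegular.smulShortComplex_shortExact (M := ModuleCat.of R M) hreg)) i (i + 1) rfl)
      (hzero.eq_zero_of_src _) (hzero'.eq_zero_of_tgt _)
  exact length_le_idealDepth hmem hrs

lemma exists_isSMulRegular_quotient_of_length_lt_localDepth {rs : List R}
    (hrs : IsWeaklyRegular M rs) (hmem : ∀ r ∈ rs, r ∈ maximalIdeal R)
    (h : (rs.length : ℕ∞) < localDepth R M) :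
    ∃ y ∈ maximalIdeal R, IsSMulRegular (M ⧸ (Ideal.ofList rs • ⊤ : Submodule R M)) y := by
  induction rs generalizing M with
  | nil =>
    obtain ⟨ys, hlen, hmem, hys⟩ := exists_isRegular_of_le_idealDepth (n := 1)
      (Order.add_one_le_of_lt h)
    obtain ⟨y, rfl⟩ := List.length_eq_one_iff.mp hlen
    have e := Submodule.quotEquivOfEqBot (Ideal.ofList ([] : List R) • ⊤ : Submodule R M) (by simp)
    exact ⟨y, hmem y (by simp),
      (e.isSMulRegular_congr y).mpr ((isWeaklyRegular_singleton_iff M y).mp hys.1)⟩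
  | cons x rs ih =>
    rw [isWeaklyRegular_cons_iff] at hrs
    have hx := hmem x (by simp)
    have : Nontrivial (QuotSMulTop x M) := nontrivial_quotSMulTop_of_mem_maximalIdeal _ hx
    have hlt : (rs.length : ℕ∞) < localDepth R (QuotSMulTop x M) :=
      lt_of_lt_of_le (by exact_mod_cast rs.length.lt_succ_self)
        (le_localDepth_quotSMulTop hx hrs.1 (n := rs.length + 1)
          (by simpa using Order.add_one_le_of_lt h))
    obtain ⟨y, hy, hreg⟩ := ih hrs.2 (fun r hr => hmem r (by simp [hr])) hlt
    exact ⟨y, hy, ((Submodule.quotOfListConsSMulTopEquivQuotSMulTopInner M x rs).isSMulRegular_congr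
      y).mpr hreg⟩

end LocalDepth

section AssociatedPrimes

open RingTheory.Sequence IsLocalRing

variable {R : Type u} [CommRing R] [IsNoetherianRing R]

lemma exists_isSMulRegular_iff {M : Type v} [AddCommGroup M] [Module R M] [Module.Finite R M]
    {I : Ideal R} :
    (∃ y ∈ I, IsSMulRegular M y) ↔ ∀ p ∈ associatedPrimes R M, ¬ I ≤ p := by
  have hunion := biUnion_associatedPrimes_eq_compl_regular R M
  constructor
  · rintro ⟨y, hy, hreg⟩ p hp hle
    exact hunion.subset (Set.mem_biUnion hp (hle hy)) hreg
  · contrapose!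
    intro h
    exact (I.subset_union_prime_finite (associatedPrimes.finite R M) (f := id) 0 0
      fun _ hp _ _ => hp.1).1 fun y hy => hunion.symm ▸ h y hy

variable {M : Type u} [AddCommGroup M] [Module R M] [Module.Finite R M]

lemma maximalIdeal_mem_associatedPrimes_quotient_iff [IsLocalRing R] [Nontrivial M] {rs : List R}
    (hrs : IsWeaklyRegular M rs) (hmem : ∀ r ∈ rs, r ∈ maximalIdeal R) :
    maximalIdeal R ∈ associatedPrimes R (M ⧸ (Ideal.ofList rs • ⊤ : Submodule R M)) ↔
      localDepth R M ≤ rs.length := by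
  have hext : (rs.length : ℕ∞) < localDepth R M ↔
      ∃ y ∈ maximalIdeal R, IsSMulRegular (M ⧸ (Ideal.ofList rs • ⊤ : Submodule R M)) y :=
    ⟨exists_isSMulRegular_quotient_of_length_lt_localDepth hrs hmem, fun ⟨_, hy, hreg⟩ =>
      length_lt_idealDepth (maximalIdeal_smul_top_lt_top M).ne hrs hmem hy hreg⟩
  rw [← not_iff_not, not_le, hext, exists_isSMulRegular_iff]
  constructor
  · intro hnot p hp hle
    rw [← (maximalIdeal.isMaximal R).eq_of_le hp.isPrime.ne_top hle] at hp
    exact hnot hp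
  · exact fun h hm => h _ hm le_rfl

end AssociatedPrimes

section Localization

variable {R : Type u} [CommRing R] {M : Type v} [AddCommGroup M] [Module R M]

lemma mem_support_localizedModule_iff (S : Submonoid R) (q : PrimeSpectrum (Localization S)) :
    q ∈ Module.support (Localization S) (LocalizedModule S M) ↔
      q.comap (algebraMap R (Localization S)) ∈ Module.support R M := by
  rw [Module.mem_support_iff', Module.mem_support_iff']
  constructor
  · rintro ⟨m', hm⟩
    induction m' using LocalizedModule.induction_on with | _ m s
    refine ⟨m, fun r hr h => hm (algebraMap R _ r) hr ?_⟩
    rw [algebraMap_smul, LocalizedModule.smul'_mk, h, LocalizedModule.zero_mk]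
  · rintro ⟨m, hm⟩
    refine ⟨LocalizedModule.mk m 1, fun r' hr' h => ?_⟩
    obtain ⟨r, s, rfl⟩ := IsLocalization.exists_mk'_eq S r'
    rw [← Localization.mk_eq_mk', LocalizedModule.mk_smul_mk, ← LocalizedModule.zero_mk 1,
      LocalizedModule.mk_eq] at h
    obtain ⟨t, ht⟩ := h
    rw [one_smul, smul_zero, smul_zero] at ht
    refine hm (t * r) (fun hmem => ?_) (by rw [mul_smul]; exact ht)
    change algebraMap R (Localization S) (t * r) ∈ q.asIdeal at hmem
    rw [map_mul, Ideal.unit_mul_mem_iff_mem _ (IsLocalization.map_units _ t)] at hmem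
    exact hr' (IsLocalization.mk'_mem_iff.mpr hmem)

lemma heightAt_eq_height (p : PrimeSpectrum R) (hp : p ∈ Module.support R M) :
    heightAt R M p = (Order.height (⟨p, hp⟩ : Module.support R M) : WithBot ℕ∞) := by
  rw [Order.height_eq_krullDim_Iic]
  let e := IsLocalization.AtPrime.primeSpectrumOrderIso (Localization.AtPrime p.asIdeal) p.asIdeal
  have comap_symm (q : Set.Iic p) : (e.symm q).comap (algebraMap R _) = q.1 :=
    congrArg Subtype.val (e.apply_symm_apply q)
  exact Order.krullDim_eq_of_orderIso
    { toFun q := ⟨⟨(e q.1).1, (mem_support_localizedModule_iff _ _).mp q.2⟩, (e q.1).2⟩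
      invFun q := ⟨e.symm ⟨q.1.1, q.2⟩, (mem_support_localizedModule_iff _ _).mpr
        ((comap_symm ⟨q.1.1, q.2⟩).symm ▸ q.1.2)⟩
      left_inv q := Subtype.ext (e.symm_apply_apply q.1)
      right_inv q := Subtype.ext (Subtype.ext (comap_symm ⟨q.1.1, q.2⟩))
      map_rel_iff' := e.map_rel_iff }

lemma heightAt_add_one_le {p q : PrimeSpectrum R} (hq : q ∈ Module.support R M) (h : q < p) :
    heightAt R M q + 1 ≤ heightAt R M p := by
  have hp := Module.mem_support_mono h.le hq
  rw [heightAt_eq_height q hq, heightAt_eq_height p hp]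
  have hlt : (⟨q, hq⟩ : Module.support R M) < ⟨p, hp⟩ := h
  exact_mod_cast Order.height_add_one_le hlt

end Localization

section LocalizedRegularSequence

open RingTheory.Sequence IsLocalRing

variable {R : Type u} [CommRing R]

lemma map_algebraMap_mem_maximalIdeal {q : PrimeSpectrum R} {rs : List R}
    (hmem : ∀ r ∈ rs, r ∈ q.asIdeal) :
    ∀ r ∈ rs.map (algebraMap R (Localization.AtPrime q.asIdeal)),
      r ∈ maximalIdeal (Localization.AtPrime q.asIdeal) := by
  intro r hr
  obtain ⟨x, hx, rfl⟩ := List.mem_map.mp hr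
  exact (IsLocalization.AtPrime.to_map_mem_maximal_iff _ q.asIdeal x).mpr (hmem x hx)

variable {M : Type v} [AddCommGroup M] [Module R M] {q : PrimeSpectrum R} {rs : List R}

lemma localized_ofList_smul_top (S : Submonoid R) (rs : List R) :
    (Ideal.ofList rs • ⊤ : Submodule R M).localized S =
      Ideal.ofList (rs.map (algebraMap R (Localization S))) • ⊤ := by
  rw [Submodule.localized, Submodule.localized'_smul, Ideal.localized'_eq_map,
    Submodule.localized'_top, Ideal.map_ofList]

lemma mem_associatedPrimes_quotient_ofList_iff [IsNoetherianRing R] :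
    q.asIdeal ∈ associatedPrimes R (M ⧸ (Ideal.ofList rs • ⊤ : Submodule R M)) ↔
      maximalIdeal (Localization.AtPrime q.asIdeal) ∈
        associatedPrimes (Localization.AtPrime q.asIdeal)
          (LocalizedModule q.asIdeal.primeCompl M ⧸
            (Ideal.ofList (rs.map (algebraMap R (Localization.AtPrime q.asIdeal))) • ⊤ :
              Submodule (Localization.AtPrime q.asIdeal)
                (LocalizedModule q.asIdeal.primeCompl M))) := by
  rw [← localized_ofList_smul_top,
    ← Module.associatedPrimes.preimage_comap_associatedPrimes_eq_associatedPrimes_of_isLocalizedModule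
      q.asIdeal.primeCompl (Localization.AtPrime q.asIdeal)
      ((Ideal.ofList rs • ⊤ : Submodule R M).toLocalizedQuotient q.asIdeal.primeCompl),
    Set.mem_preimage, ← Ideal.under_def, Localization.AtPrime.under_maximalIdeal]

variable [Module.Finite R M]

lemma smul_top_ne_top_of_mem_support {I : Ideal R} (hq : q ∈ Module.support R M)
    (hI : I ≤ q.asIdeal) : I • (⊤ : Submodule R M) ≠ ⊤ := by
  have hmem : q ∈ Module.support R (M ⧸ (I • ⊤ : Submodule R M)) := by
    rw [Module.support_quotient]
    exact ⟨hq, hI⟩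
  exact Submodule.Quotient.nontrivial_iff.mp (Module.nonempty_support_iff.mp ⟨q, hmem⟩)

lemma isRegular_localizedModule (hq : q ∈ Module.support R M)
    (hrs : IsWeaklyRegular M rs) (hmem : ∀ r ∈ rs, r ∈ q.asIdeal) :
    IsRegular (LocalizedModule q.asIdeal.primeCompl M)
      (rs.map (algebraMap R (Localization.AtPrime q.asIdeal))) :=
  have := Module.mem_support_iff.mp hq
  hrs.isRegular_of_isLocalizedModule_of_mem (Localization.AtPrime q.asIdeal) q.asIdeal
    (LocalizedModule.mkLinearMap q.asIdeal.primeCompl M) hmem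

lemma idealDepth_le_depthAt (hq : q ∈ Module.support R M) :
    idealDepth R q.asIdeal M ≤ depthAt R M q := by
  refine sSup_le ?_
  rintro _ ⟨rs, rfl, hmem, hrs⟩
  have hlen := length_le_idealDepth (map_algebraMap_mem_maximalIdeal hmem)
    (isRegular_localizedModule hq hrs.1 hmem)
  rwa [List.length_map] at hlen

variable [IsNoetherianRing R]

lemma depthAt_le_heightAt (hq : q ∈ Module.support R M) :
    (depthAt R M q : WithBot ℕ∞) ≤ heightAt R M q :=
  have := Module.mem_support_iff.mp hq
  localDepth_le_supportDim _

lemma heightAt_eq_heightAt_quotient_add_length (hq : q ∈ Module.support R M)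
    (hrs : IsWeaklyRegular M rs) (hmem : ∀ r ∈ rs, r ∈ q.asIdeal) :
    heightAt R M q = heightAt R (M ⧸ (Ideal.ofList rs • ⊤ : Submodule R M)) q + rs.length := by
  have := Module.mem_support_iff.mp hq
  have hdim := Module.supportDim_add_length_eq_supportDim_of_isRegular _
    (isRegular_localizedModule hq hrs hmem)
  rw [List.length_map] at hdim
  refine hdim.symm.trans (congrArg (· + _) (congrArg (fun s : Set _ => Order.krullDim s) ?_))
  ext q'
  rw [mem_support_localizedModule_iff, Module.support_quotient, Module.support_quotient,
    ← Ideal.map_ofList, Set.mem_inter_iff, Set.mem_inter_iff, mem_support_localizedModule_iff]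
  exact and_congr Iff.rfl Ideal.map_le_iff_le_comap

lemma exists_isRegular_length_eq_idealDepth_of_mem_support (hq : q ∈ Module.support R M) :
    ∃ rs : List R, (rs.length : ℕ∞) = idealDepth R q.asIdeal M ∧ (∀ r ∈ rs, r ∈ q.asIdeal) ∧
      IsRegular M rs := by
  have := Module.mem_support_iff.mp hq
  have : Nontrivial M := Module.nonempty_support_iff.mp ⟨q, hq⟩
  exact exists_isRegular_length_eq_idealDepth
    (ne_top_of_le_ne_top (localDepth_ne_top _) (idealDepth_le_depthAt hq))

end LocalizedRegularSequence

section DepthAt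

open RingTheory.Sequence IsLocalRing

variable {R : Type u} [CommRing R] [IsNoetherianRing R] {M : Type u} [AddCommGroup M] [Module R M]
  [Module.Finite R M] {q : PrimeSpectrum R}

lemma mem_associatedPrimes_iff_depthAt_le {rs : List R} (hq : q ∈ Module.support R M)
    (hrs : IsWeaklyRegular M rs) (hmem : ∀ r ∈ rs, r ∈ q.asIdeal) :
    q.asIdeal ∈ associatedPrimes R (M ⧸ (Ideal.ofList rs • ⊤ : Submodule R M)) ↔
      depthAt R M q ≤ rs.length := by
  have := Module.mem_support_iff.mp hq
  rw [mem_associatedPrimes_quotient_ofList_iff, maximalIdeal_mem_associatedPrimes_quotient_iff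
    (isRegular_localizedModule hq hrs hmem).1 (map_algebraMap_mem_maximalIdeal hmem),
    List.length_map, depthAt]

lemma exists_le_depthAt_le_idealDepth (hq : q ∈ Module.support R M) :
    ∃ p, q ≤ p ∧ depthAt R M p ≤ idealDepth R q.asIdeal M := by
  obtain ⟨rs, hlen, hmem, hrs⟩ := exists_isRegular_length_eq_idealDepth_of_mem_support hq
  have hmaximal : ¬ ∃ y ∈ q.asIdeal,
      IsSMulRegular (M ⧸ (Ideal.ofList rs • ⊤ : Submodule R M)) y := fun ⟨_, hy, hreg⟩ =>
    (length_lt_idealDepth (smul_top_ne_top_of_mem_support hq le_rfl) hrs.1 hmem hy hreg).ne hlen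
  rw [exists_isSMulRegular_iff] at hmaximal
  push Not at hmaximal
  obtain ⟨I, hI, hle⟩ := hmaximal
  let p : PrimeSpectrum R := ⟨I, hI.isPrime⟩
  have hqp : q ≤ p := hle
  exact ⟨p, hqp, hlen ▸ (mem_associatedPrimes_iff_depthAt_le (Module.mem_support_mono hqp hq) hrs.1
    fun r hr => hle (hmem r hr)).mp hI⟩

end DepthAt

section InfinitelyManyPrimes

variable {R : Type u} [CommRing R] [IsNoetherianRing R]

/- If only finitely many primes lay strictly between `p` and `r`, prime avoidance would give an
element `y ∈ r` outside all of them, so that `r` would be minimal over `p + (y)`; Krull's principal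
ideal theorem then leaves no room for `q`. -/
lemma infinite_Ioo_of_lt_of_lt {p q r : PrimeSpectrum R} (hpq : p < q) (hqr : q < r) :
    (Set.Ioo p r).Infinite := by
  intro hfin
  have hpr := hpq.trans hqr
  obtain ⟨y, hyr, hy⟩ : ∃ y ∈ r.asIdeal, ∀ s ∈ Set.Ico p r, y ∉ s.asIdeal := by
    by_contra! h
    have hfin' : (Set.Ico p r).Finite := Set.Ioo_insert_left hpr ▸ hfin.insert p
    obtain ⟨s, hs, hle⟩ := (r.asIdeal.subset_union_prime_finite hfin' (f := PrimeSpectrum.asIdeal)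
      p p fun s _ _ _ => s.2).1 fun y hy => by
        obtain ⟨s, hs, hys⟩ := h y hy
        exact Set.mem_biUnion hs hys
    exact hs.2.not_ge hle
  have hr : r.asIdeal ∈ (Ideal.span (insert y (p.asIdeal : Set R))).minimalPrimes := by
    obtain ⟨s, hs, hsr⟩ := Ideal.exists_minimalPrimes_le
      (Ideal.span_le.mpr (Set.insert_subset hyr hpr.le) : _ ≤ r.asIdeal)
    have hys : insert y (p.asIdeal : Set R) ⊆ s := Ideal.span_le.mp hs.1.2
    suffices s = r.asIdeal from this ▸ hs
    by_contra hne
    exact hy ⟨s, hs.1.1⟩ ⟨fun x hx => hys (Or.inr hx), lt_of_le_of_ne hsr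
      fun h => hne (congrArg PrimeSpectrum.asIdeal h)⟩ (hys (Or.inl rfl))
  have hq := Ideal.mem_minimalPrimes_span_of_mem_minimalPrimes_span_insert hqr y p.asIdeal hr
    p.asIdeal hpq.le fun x hx => Ideal.le_radical (Ideal.subset_span (Or.inr hx))
  rw [Ideal.span_eq] at hq
  exact hpq.not_ge (hq.2 ⟨p.2, le_rfl⟩ hpq.le)

lemma heightAt_le_one_of_finite {M : Type v} [AddCommGroup M] [Module R M] {p : PrimeSpectrum R}
    (hp : p ∈ Module.support R M) (hfin : (Module.support R M ∩ Set.Iic p).Finite) :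
    heightAt R M p ≤ 1 := by
  rw [heightAt_eq_height p hp]
  by_contra! hlt
  have hlt : (1 : ℕ∞) < Order.height (⟨p, hp⟩ : Module.support R M) := by exact_mod_cast hlt
  obtain ⟨c, hlast, hlen⟩ := Order.exists_series_of_le_height _ (n := 2)
    (Order.add_one_le_of_lt hlt)
  have h01 : c ⟨0, by omega⟩ < c ⟨1, by omega⟩ := c.strictMono (by simp [Fin.lt_def])
  have h12 : c ⟨1, by omega⟩ < ⟨p, hp⟩ := hlast ▸ c.strictMono (by simp [Fin.lt_def, hlen])
  exact infinite_Ioo_of_lt_of_lt h01 h12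
    (hfin.subset fun q hq => ⟨Module.mem_support_mono hq.1.le (c _).2, hq.2.le⟩)

end InfinitelyManyPrimes

section CohenMacaulayDefect

/-- The Cohen–Macaulay defect `dim M - depth M` of a module over a local ring is at most `n`. The
inequality is written additively to avoid subtraction in `WithBot ℕ∞`; it holds for the zero module,
whose dimension is `⊥`. -/
def CMDefectLE (R : Type u) [CommRing R] [IsLocalRing R] (n : ℕ) (M : Type v) [AddCommGroup M]
    [Module R M] : Prop :=
  supportDim R M ≤ (localDepth R M : WithBot ℕ∞) + n

lemma CMDefectLE.of_subsingleton {R : Type u} [CommRing R] [IsLocalRing R] (n : ℕ) (M : Type v)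
    [AddCommGroup M] [Module R M] [Subsingleton M] : CMDefectLE R n M :=
  (Module.supportDim_eq_bot_of_subsingleton R M).trans_le bot_le

lemma cmDefectLE_congr {R : Type u} [CommRing R] [IsLocalRing R] {n : ℕ} {F G : Type*}
    [AddCommGroup F] [Module R F] [AddCommGroup G] [Module R G] (e : F ≃ₗ[R] G) :
    CMDefectLE R n F ↔ CMDefectLE R n G := by
  rw [CMDefectLE, CMDefectLE, supportDim_congr e, localDepth_congr e]

lemma IsCMModule.cmDefectLE_zero {R : Type u} [CommRing R] {M : Type v} [AddCommGroup M]
    [Module R M] (h : IsCMModule R M) (q : PrimeSpectrum R) :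
    CMDefectLE (Localization.AtPrime q.asIdeal) 0 (LocalizedModule q.asIdeal.primeCompl M) := by
  cases subsingleton_or_nontrivial (LocalizedModule q.asIdeal.primeCompl M) with
  | inl _ => exact .of_subsingleton 0 _
  | inr hq => exact (h q hq).ge.trans (by simp [depthAt])

variable {R : Type u} [CommRing R] [IsNoetherianRing R] {M : Type u} [AddCommGroup M] [Module R M]
  [Module.Finite R M] {q : PrimeSpectrum R}

lemma isAlmostCMModule_of_cmDefectLE (h : ∀ q : PrimeSpectrum R,
    CMDefectLE (Localization.AtPrime q.asIdeal) 1 (LocalizedModule q.asIdeal.primeCompl M)) :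
    IsAlmostCMModule R M := by
  intro q hq
  obtain ⟨p, hqp, hp⟩ := exists_le_depthAt_le_idealDepth hq
  refine (idealDepth_le_depthAt hq).antisymm (le_trans ?_ hp)
  rcases hqp.eq_or_lt with rfl | hlt
  · rfl
  · have hle : (depthAt R M q : WithBot ℕ∞) + 1 ≤ depthAt R M p + 1 :=
      calc (depthAt R M q : WithBot ℕ∞) + 1 ≤ heightAt R M q + 1 := by
            gcongr
            exact depthAt_le_heightAt hq
        _ ≤ heightAt R M p := heightAt_add_one_le hq hlt
        _ ≤ depthAt R M p + 1 := h p
    exact (ENat.add_le_add_iff_right ENat.one_ne_top).mp (by exact_mod_cast hle)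

lemma IsAlmostCMModule.mem_associatedPrimes {p : PrimeSpectrum R} {rs : List R}
    (h : IsAlmostCMModule R M) (hlen : idealDepth R p.asIdeal M ≤ rs.length)
    (hrs : RingTheory.Sequence.IsWeaklyRegular M rs) (hqp : q ≤ p)
    (hq : q ∈ Module.support R (M ⧸ (Ideal.ofList rs • ⊤ : Submodule R M))) :
    q.asIdeal ∈ associatedPrimes R (M ⧸ (Ideal.ofList rs • ⊤ : Submodule R M)) := by
  rw [Module.support_quotient] at hq
  rw [mem_associatedPrimes_iff_depthAt_le hq.1 hrs fun r hr => hq.2 (Ideal.subset_span hr),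
    ← h q hq.1]
  exact (idealDepth_mono hqp).trans hlen

/- For a maximal regular sequence `rs` in `q`, all primes of `Supp (M / rs M)` below `q` are
associated primes, hence finite in number; so no chain of length two of them ends at `q`. -/
lemma IsAlmostCMModule.cmDefectLE_one (h : IsAlmostCMModule R M) (q : PrimeSpectrum R) :
    CMDefectLE (Localization.AtPrime q.asIdeal) 1 (LocalizedModule q.asIdeal.primeCompl M) := by
  cases subsingleton_or_nontrivial (LocalizedModule q.asIdeal.primeCompl M) with
  | inl _ => exact .of_subsingleton 1 _
  | inr hq =>
    have hq : q ∈ Module.support R M := hq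
    obtain ⟨rs, hlen, hmem, hrs⟩ := exists_isRegular_length_eq_idealDepth_of_mem_support hq
    let L := M ⧸ (Ideal.ofList rs • ⊤ : Submodule R M)
    have hqL : q ∈ Module.support R L := by
      rw [Module.support_quotient]
      exact ⟨hq, Ideal.span_le.mpr hmem⟩
    have hfin : (Module.support R L ∩ Set.Iic q).Finite :=
      .of_finite_image (f := PrimeSpectrum.asIdeal) ((associatedPrimes.finite R L).subset
          (Set.image_subset_iff.mpr fun _ hp => h.mem_associatedPrimes hlen.ge hrs.1 hp.2 hp.1))
        fun _ _ _ _ => PrimeSpectrum.ext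
    calc heightAt R M q = heightAt R L q + rs.length :=
          heightAt_eq_heightAt_quotient_add_length hq hrs.1 hmem
      _ ≤ 1 + rs.length := by
          gcongr
          exact heightAt_le_one_of_finite hqL hfin
      _ = depthAt R M q + (1 : ℕ) := by rw [← h q hq, ← hlen, add_comm]; rfl

end CohenMacaulayDefect

section ShortExact

open RingTheory.Sequence

lemma isWeaklyRegular_of_exact {R X₁ X₂ X₃ : Type*} [CommRing R] [AddCommGroup X₁]
    [AddCommGroup X₂] [AddCommGroup X₃] [Module R X₁] [Module R X₂] [Module R X₃]
    {f : X₁ →ₗ[R] X₂} {g : X₂ →ₗ[R] X₃} {rs : List R} (hf : Function.Injective f)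
    (hfg : Function.Exact f g) (hg : Function.Surjective g) (h₁ : IsWeaklyRegular X₁ rs)
    (h₃ : IsWeaklyRegular X₃ rs) : IsWeaklyRegular X₂ rs := by
  induction rs generalizing X₁ X₂ X₃ with
  | nil => exact .nil R X₂
  | cons r rs ih =>
    rw [isWeaklyRegular_cons_iff] at h₁ h₃ ⊢
    refine ⟨isSMulRegular_of_range_eq_ker hf hfg.linearMap_ker_eq.symm h₁.1 h₃.1, ?_⟩
    refine ih (f := QuotSMulTop.map r f) (g := QuotSMulTop.map r g) ?_
      (QuotSMulTop.map_exact r hfg hg) (QuotSMulTop.map_surjective r hg) h₁.2 h₃.2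
    have hzero : Function.Exact (0 : PUnit →ₗ[R] X₁) f :=
      (LinearMap.exact_zero_iff_injective _ _).mpr hf
    have hexact :=
      QuotSMulTop.map_first_exact_on_four_term_exact_of_isSMulRegular_last hzero hfg h₃.1
    rw [map_zero] at hexact
    exact (LinearMap.exact_zero_iff_injective _ _).mp hexact

end ShortExact

section RegularQuotient

open RingTheory.Sequence IsLocalRing

variable {R : Type u} [CommRing R] [IsLocalRing R] [IsNoetherianRing R] {M : Type v}
  [AddCommGroup M] [Module R M] [Module.Finite R M]

lemma localDepth_quotient_add_length_le [Nontrivial M] {rs : List R}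
    (hmem : ∀ r ∈ rs, r ∈ maximalIdeal R) (hrs : IsRegular M rs) :
    localDepth R (M ⧸ (Ideal.ofList rs • ⊤ : Submodule R M)) + rs.length ≤ localDepth R M := by
  have := hrs.quot_ofList_smul_nontrivial ⊤
  obtain ⟨ss, hlen, hss_mem, hss⟩ := exists_isRegular_length_eq_idealDepth
    (localDepth_ne_top (R := R) (M ⧸ (Ideal.ofList rs • ⊤ : Submodule R M)))
  have hmem' : ∀ r ∈ rs ++ ss, r ∈ maximalIdeal R := by
    simpa only [List.mem_append, or_imp, forall_and] using ⟨hmem, hss_mem⟩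
  have hreg : IsRegular M (rs ++ ss) := .of_isWeaklyRegular_of_mem_maximalIdeal _ hmem'
    ((isWeaklyRegular_append_iff _ _ _).mpr ⟨hrs.1, hss.1⟩)
  have hle := length_le_idealDepth hmem' hreg
  rwa [List.length_append, Nat.cast_add, hlen, add_comm] at hle

lemma CMDefectLE.of_quotient {n : ℕ} {rs : List R} (hmem : ∀ r ∈ rs, r ∈ maximalIdeal R)
    (hrs : IsWeaklyRegular M rs)
    (h : CMDefectLE R n (M ⧸ (Ideal.ofList rs • ⊤ : Submodule R M))) : CMDefectLE R n M := by
  cases subsingleton_or_nontrivial M with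
  | inl _ => exact .of_subsingleton n M
  | inr _ =>
    have hreg := IsRegular.of_isWeaklyRegular_of_mem_maximalIdeal _ hmem hrs
    calc supportDim R M
        = supportDim R (M ⧸ (Ideal.ofList rs • ⊤ : Submodule R M)) + rs.length :=
          (Module.supportDim_add_length_eq_supportDim_of_isRegular rs hreg).symm
      _ ≤ localDepth R (M ⧸ (Ideal.ofList rs • ⊤ : Submodule R M)) + n + rs.length := by
          gcongr
          exact h
      _ = (localDepth R (M ⧸ (Ideal.ofList rs • ⊤ : Submodule R M)) + rs.length : ℕ∞) + n := by
          push_cast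
          exact add_right_comm _ _ _
      _ ≤ localDepth R M + n := by
          gcongr
          exact WithBot.coe_le_coe.mpr (localDepth_quotient_add_length_le hmem hreg)

lemma CMDefectLE.exists_isRegular_support_quotient_subset [Nontrivial M] (h : CMDefectLE R 0 M) :
    ∃ rs : List R, (∀ r ∈ rs, r ∈ maximalIdeal R) ∧ IsRegular M rs ∧
      Module.support R (M ⧸ (Ideal.ofList rs • ⊤ : Submodule R M)) ⊆ {closedPoint R} := by
  obtain ⟨rs, hlen, hmem, hrs⟩ := exists_isRegular_length_eq_idealDepth
    (localDepth_ne_top (R := R) M)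
  refine ⟨rs, hmem, hrs, fun p hp => ?_⟩
  have := hrs.quot_ofList_smul_nontrivial ⊤
  have hdim := Module.supportDim_add_length_eq_supportDim_of_isRegular rs hrs
  obtain ⟨d, hd⟩ := WithBot.ne_bot_iff_exists.mp
    (Module.supportDim_ne_bot_of_nontrivial R (M ⧸ Ideal.ofList rs • (⊤ : Submodule R M)))
  have hle : (d : WithBot ℕ∞) + rs.length ≤ (rs.length : ℕ∞) := by
    rw [hd, hdim, hlen]
    exact h.trans_eq (add_zero _)
  have hle : d + rs.length ≤ 0 + rs.length := by
    rw [zero_add]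
    exact_mod_cast hle
  have hd0 : d = 0 := le_bot_iff.mp ((ENat.add_le_add_iff_right (ENat.natCast_ne_top _)).mp hle)
  rw [support_of_supportDim_eq_zero R _ (hd.symm.trans (by rw [hd0]; rfl))] at hp
  exact PrimeSpectrum.ext ((maximalIdeal.isMaximal R).eq_of_le p.2.ne_top hp).symm

end RegularQuotient

/-- Mathlib's module structure through the left factor of a tensor product, restated so that it can
be given precedence over `tensorRightModule`. -/
abbrev tensorLeftModule {R R' M N : Type*} [CommSemiring R] [Semiring R'] [AddCommMonoid M]
    [AddCommMonoid N] [Module R M] [Module R N] [Module R' M] [SMulCommClass R R' M] :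
    Module R' (M ⊗[R] N) :=
  TensorProduct.leftModule

/-- The module structure of a tensor product over its base ring, restated so that it can be given
precedence over `tensorRightModule`. -/
abbrev tensorModule {R M N : Type*} [CommSemiring R] [AddCommMonoid M]
    [AddCommMonoid N] [Module R M] [Module R N] : Module R (M ⊗[R] N) :=
  TensorProduct.instModule

section TensorProduct

attribute [local instance] tensorLeftModule tensorModule

variable {A B : Type u} [CommRing A] [CommRing B] [Algebra A B]
  {N : Type u} [AddCommGroup N] [Module A N] [Module B N] [IsScalarTower A B N]
  (M : Type u) [AddCommGroup M] [Module A M]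

lemma finite_tensorProduct_left [Module.Finite A M] [Module.Finite B N] :
    Module.Finite B (N ⊗[A] M) :=
  .equiv (AlgebraTensorModule.cancelBaseChange A B B N M)

variable (N) in
/-- The reduction of a `B`-module modulo an ideal `I` of `A`, as a base change from `A`. -/
def quotientMapSMulTopEquivTensor (I : Ideal A) :
    (N ⧸ (I.map (algebraMap A B) • ⊤ : Submodule B N)) ≃ₗ[B] N ⊗[A] (A ⧸ I) :=
  (tensorQuotEquivQuotSMul N (I.map (algebraMap A B))).symm ≪≫ₗ
    TensorProduct.congr (.refl B N) (I.qoutMapEquivTensorQout B) ≪≫ₗ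
      AlgebraTensorModule.cancelBaseChange A B B N (A ⧸ I)

/-- Reduction modulo an ideal `I` of `A` commutes with tensor products over `A`. -/
def quotientMapSMulTopEquiv (I : Ideal A) :
    ((N ⊗[A] M) ⧸ (I.map (algebraMap A B) • ⊤ : Submodule B (N ⊗[A] M))) ≃ₗ[B]
      N ⊗[A] (M ⧸ (I • ⊤ : Submodule A M)) :=
  quotientMapSMulTopEquivTensor (N ⊗[A] M) I ≪≫ₗ
    AlgebraTensorModule.assoc A A B N M (A ⧸ I) ≪≫ₗ
      AlgebraTensorModule.congr (.refl B N) (tensorQuotEquivQuotSMul M I)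

variable {M}

lemma notMem_support_tensorProduct_of_forall_tmul {q : PrimeSpectrum B}
    (h : ∀ (y : N) (z : M), ∃ r ∉ q.asIdeal, r • (y ⊗ₜ[A] z) = 0) :
    q ∉ Module.support B (N ⊗[A] M) := by
  rw [Module.notMem_support_iff']
  intro x
  induction x with
  | zero => exact ⟨1, q.2.one_notMem, smul_zero _⟩
  | tmul y z => exact h y z
  | add x y hx hy =>
    obtain ⟨r, hr, hrx⟩ := hx
    obtain ⟨s, hs, hsy⟩ := hy
    exact ⟨s * r, q.2.mul_notMem hs hr, by
      rw [smul_add, mul_smul, hrx, mul_comm, mul_smul, hsy, smul_zero, smul_zero, add_zero]⟩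

lemma mem_support_left_of_mem_support_tensorProduct {q : PrimeSpectrum B}
    (hq : q ∈ Module.support B (N ⊗[A] M)) : q ∈ Module.support B N := by
  contrapose! hq
  rw [Module.notMem_support_iff'] at hq
  refine notMem_support_tensorProduct_of_forall_tmul fun y z => ?_
  obtain ⟨r, hr, hry⟩ := hq y
  exact ⟨r, hr, by rw [smul_tmul', hry, zero_tmul]⟩

lemma comap_mem_support_right_of_mem_support_tensorProduct {q : PrimeSpectrum B}
    (hq : q ∈ Module.support B (N ⊗[A] M)) :
    q.comap (algebraMap A B) ∈ Module.support A M := by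
  contrapose! hq
  rw [Module.notMem_support_iff'] at hq
  refine notMem_support_tensorProduct_of_forall_tmul fun y z => ?_
  obtain ⟨r, hr, hrz⟩ := hq z
  exact ⟨algebraMap A B r, hr, by rw [algebraMap_smul, ← tmul_smul, hrz, tmul_zero]⟩

end TensorProduct

section LocalFlat

open RingTheory.Sequence IsLocalRing

attribute [local instance] tensorLeftModule tensorModule

variable {A B : Type u} [CommRing A] [IsLocalRing A] [CommRing B] [Algebra A B] {N : Type u}
  [AddCommGroup N] [Module A N] [Module B N] [IsScalarTower A B N]

lemma support_tensorProduct_subset_of_support_subset [Module.Finite B N] {L : Type u}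
    [AddCommGroup L] [Module A L] (hsupp : Module.support A L ⊆ {closedPoint A}) :
    Module.support B (N ⊗[A] L) ⊆
      Module.support B (N ⧸ ((maximalIdeal A).map (algebraMap A B) • ⊤ : Submodule B N)) := by
  intro q hq
  rw [Module.support_quotient]
  refine ⟨mem_support_left_of_mem_support_tensorProduct hq, Ideal.map_le_iff_le_comap.mpr ?_⟩
  exact (congrArg PrimeSpectrum.asIdeal
    (hsupp (comap_mem_support_right_of_mem_support_tensorProduct hq))).ge

variable [IsNoetherianRing A] [Module.Flat A N]

/- Such an `L` has a finite filtration with quotients isomorphic to the residue field, and the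
functor `N ⊗ -` preserves short exact sequences. -/
lemma isWeaklyRegular_tensorProduct_of_support_subset {rs : List B}
    (hrs : IsWeaklyRegular
      (N ⧸ ((maximalIdeal A).map (algebraMap A B) • ⊤ : Submodule B N)) rs)
    {L : Type u} [AddCommGroup L] [Module A L] [hL : Module.Finite A L]
    (hsupp : Module.support A L ⊆ {closedPoint A}) : IsWeaklyRegular (N ⊗[A] L) rs := by
  induction hL using IsNoetherianRing.induction_on_isQuotientEquivQuotientPrime A with
  | subsingleton L => exact ⟨fun _ _ => Function.injective_of_subsingleton _⟩
  | quotient L p e =>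
    obtain rfl : p = closedPoint A := hsupp (by
      rw [e.support_eq, Module.mem_support_iff_of_finite, Ideal.annihilator_quotient])
    exact ((quotientMapSMulTopEquivTensor N _ ≪≫ₗ
      AlgebraTensorModule.congr (.refl B N) e.symm).isWeaklyRegular_congr rs).mp hrs
  | exact L₁ L₂ L₃ f g hf hg hfg h₁ h₃ =>
    rw [Module.support_of_exact hfg hf hg, Set.union_subset_iff] at hsupp
    exact isWeaklyRegular_of_exact (f := AlgebraTensorModule.lTensor B N f)
      (g := AlgebraTensorModule.lTensor B N g)
      (Module.Flat.lTensor_preserves_injective_linearMap f hf) (lTensor_exact N hfg hg)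
      (LinearMap.lTensor_surjective N hg) (h₁ hsupp.1) (h₃ hsupp.2)

variable [IsLocalRing B] [Module.Finite B N]

lemma localDepth_le_localDepth_tensorProduct_of_support_subset {L : Type u} [AddCommGroup L]
    [Module A L] [Module.Finite A L] [Nontrivial (N ⊗[A] L)]
    (hsupp : Module.support A L ⊆ {closedPoint A}) :
    localDepth B (N ⧸ ((maximalIdeal A).map (algebraMap A B) • ⊤ : Submodule B N)) ≤
      localDepth B (N ⊗[A] L) := by
  have : Module.Finite B (N ⊗[A] L) := finite_tensorProduct_left L
  refine sSup_le ?_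
  rintro _ ⟨rs, rfl, hmem, hrs⟩
  exact length_le_idealDepth hmem (.of_isWeaklyRegular_of_mem_maximalIdeal _ hmem
    (isWeaklyRegular_tensorProduct_of_support_subset hrs.1 hsupp))

lemma CMDefectLE.tensorProduct_of_support_subset {n : ℕ}
    (hN : CMDefectLE B n (N ⧸ ((maximalIdeal A).map (algebraMap A B) • ⊤ : Submodule B N)))
    {L : Type u} [AddCommGroup L] [Module A L] [Module.Finite A L]
    (hsupp : Module.support A L ⊆ {closedPoint A}) : CMDefectLE B n (N ⊗[A] L) := by
  cases subsingleton_or_nontrivial (N ⊗[A] L) with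
  | inl _ => exact .of_subsingleton n _
  | inr _ =>
    let F := N ⧸ ((maximalIdeal A).map (algebraMap A B) • ⊤ : Submodule B N)
    calc supportDim B (N ⊗[A] L)
        ≤ supportDim B F :=
          Order.krullDim_le_of_strictMono
            (Set.inclusion (support_tensorProduct_subset_of_support_subset hsupp))
            fun _ _ h => h
      _ ≤ localDepth B F + n := hN
      _ ≤ localDepth B (N ⊗[A] L) + n := by
          gcongr
          exact WithBot.coe_le_coe.mpr
            (localDepth_le_localDepth_tensorProduct_of_support_subset hsupp)

/- A maximal regular sequence `rs` on `M` stays regular on `N ⊗ M`, and `M / rs M` has finite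
length, so that `N ⊗ (M / rs M)` is compared with the fiber of `N`. -/
theorem CMDefectLE.tensorProduct [IsNoetherianRing B] [IsLocalHom (algebraMap A B)] {n : ℕ}
    {M : Type u} [AddCommGroup M] [Module A M] [Module.Finite A M] (hM : CMDefectLE A 0 M)
    (hN : CMDefectLE B n (N ⧸ ((maximalIdeal A).map (algebraMap A B) • ⊤ : Submodule B N))) :
    CMDefectLE B n (N ⊗[A] M) := by
  cases subsingleton_or_nontrivial M with
  | inl _ => exact .of_subsingleton n _
  | inr _ =>
    obtain ⟨rs, hmem, hrs, hsupp⟩ := hM.exists_isRegular_support_quotient_subset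
    have : Module.Finite B (N ⊗[A] M) := finite_tensorProduct_left M
    have hmem' : ∀ r ∈ rs.map (algebraMap A B), r ∈ maximalIdeal B :=
      List.forall_mem_map.mpr fun r hr => map_nonunit _ r (hmem r hr)
    have hrs' : IsWeaklyRegular (N ⊗[A] M) (rs.map (algebraMap A B)) :=
      (isWeaklyRegular_map_algebraMap_iff B _ rs).mpr hrs.1.isWeaklyRegular_lTensor
    refine .of_quotient hmem' hrs' ?_
    rw [← Ideal.map_ofList, cmDefectLE_congr (quotientMapSMulTopEquiv M (Ideal.ofList rs))]
    exact hN.tensorProduct_of_support_subset hsupp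

end LocalFlat

section Surjective

open RingTheory.Sequence IsLocalRing

variable {S T : Type*} [CommRing S] [CommRing T] [Algebra S T] {G : Type*} [AddCommGroup G]
  [Module S G] [Module T G] [IsScalarTower S T G]

lemma comap_mem_support_iff_of_surjective (h : Function.Surjective (algebraMap S T))
    {p : PrimeSpectrum T} :
    p.comap (algebraMap S T) ∈ Module.support S G ↔ p ∈ Module.support T G := by
  simp only [Module.mem_support_iff', h.forall, algebraMap_smul]
  rfl

lemma exists_comap_eq_of_mem_support (h : Function.Surjective (algebraMap S T))
    {q : PrimeSpectrum S} (hq : q ∈ Module.support S G) :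
    ∃ p : PrimeSpectrum T, p.comap (algebraMap S T) = q := by
  obtain ⟨m, hm⟩ := Module.mem_support_iff'.mp hq
  rw [← Set.mem_range, range_comap_of_surjective _ _ h]
  intro s hs
  by_contra hsq
  exact hm s hsq (by rw [← algebraMap_smul T s m, (RingHom.mem_ker).mp hs, zero_smul])

variable (G)

lemma supportDim_le_supportDim_of_surjective (h : Function.Surjective (algebraMap S T)) :
    supportDim S G ≤ supportDim T G := by
  refine Order.krullDim_le_of_strictComono_and_surj
    (fun p : Module.support T G =>
      (⟨p.1.comap (algebraMap S T), (comap_mem_support_iff_of_surjective h).mpr p.2⟩ :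
        Module.support S G))
    (fun p q hlt => ?_) fun ⟨q, hq⟩ => ?_
  · have comap_le_comap_iff (p q : PrimeSpectrum T) :
        p.comap (algebraMap S T) ≤ q.comap (algebraMap S T) ↔ p ≤ q :=
      Ideal.comap_le_comap_iff_of_surjective _ h _ _
    exact (lt_iff_lt_of_le_iff_le' (comap_le_comap_iff _ _) (comap_le_comap_iff _ _)).mp hlt
  · obtain ⟨p, rfl⟩ := exists_comap_eq_of_mem_support h hq
    exact ⟨⟨p, (comap_mem_support_iff_of_surjective h).mp hq⟩, rfl⟩

variable [IsLocalRing S] [IsLocalRing T]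

lemma localDepth_le_localDepth_of_surjective (h : Function.Surjective (algebraMap S T)) :
    localDepth T G ≤ localDepth S G := by
  refine sSup_le ?_
  rintro _ ⟨rs, rfl, hmem, hrs⟩
  obtain ⟨g, hg⟩ := h.hasRightInverse
  have : IsLocalHom (algebraMap S T) := .of_surjective _ h
  rw [← List.length_map (f := g)]
  refine length_le_idealDepth (List.forall_mem_map.mpr fun r hr => ?_)
    ((AddEquiv.refl G).isRegular_congr (List.forall₂_map_left_iff.mpr
      (List.forall₂_same.mpr fun r _ x => ?_)) |>.mpr hrs)
  · exact (map_mem_nonunits_iff (algebraMap S T) (g r)).mp ((hg r).symm ▸ hmem r hr)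
  · exact (algebraMap_smul T (g r) x).symm.trans (congrArg (· • x) (hg r))

variable {G}

lemma CMDefectLE.of_surjective {n : ℕ} (hG : CMDefectLE T n G)
    (h : Function.Surjective (algebraMap S T)) : CMDefectLE S n G :=
  calc supportDim S G ≤ supportDim T G := supportDim_le_supportDim_of_surjective G h
    _ ≤ localDepth T G + n := hG
    _ ≤ localDepth S G + n := by
      gcongr
      exact WithBot.coe_le_coe.mpr (localDepth_le_localDepth_of_surjective G h)

end Surjective

section LocalizationQuotient

variable {B : Type u} [CommRing B] (S : Submonoid B) (J : Ideal B)

/-- The ring `S⁻¹B / J S⁻¹B`, of which the fiber rings of a ring homomorphism are instances. -/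
abbrev LocalizationQuotient : Type u :=
  Localization S ⧸ J.map (algebraMap B (Localization S))

variable {S J}

lemma exists_isPrime_liesOver_of_le {Q : Ideal B} [Q.IsPrime] (hS : S ≤ Q.primeCompl)
    (hJ : J ≤ Q) : ∃ p : Ideal (LocalizationQuotient S J), p.IsPrime ∧ p.LiesOver Q := by
  obtain ⟨q, hq⟩ : ⟨Q, ‹_›⟩ ∈ Set.range (PrimeSpectrum.comap (algebraMap B (Localization S))) := by
    rw [PrimeSpectrum.localization_comap_range _ S]
    exact Set.disjoint_left.mpr fun _ hs => hS hs
  have hq : q.asIdeal.comap (algebraMap B (Localization S)) = Q :=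
    congrArg PrimeSpectrum.asIdeal hq
  obtain ⟨p, hp⟩ : q ∈ Set.range (PrimeSpectrum.comap
      (Ideal.Quotient.mk (J.map (algebraMap B (Localization S))))) := by
    rw [range_comap_of_surjective _ _ Ideal.Quotient.mk_surjective, Ideal.mk_ker]
    exact Ideal.map_le_iff_le_comap.mpr (hJ.trans_eq hq.symm)
  exact ⟨p.asIdeal, p.2, ⟨hq.symm.trans (congrArg (fun q : PrimeSpectrum _ =>
    q.asIdeal.comap (algebraMap B (Localization S))) hp.symm)⟩⟩

lemma exists_mul_mem_of_mul_algebraMap_eq_zero {Q : Ideal B} {p : Ideal (LocalizationQuotient S J)}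
    [p.LiesOver Q] {r : LocalizationQuotient S J} (hr : r ∉ p)
    {b : B} (h : r * algebraMap B _ b = 0) : ∃ c ∉ Q, c * b ∈ J := by
  obtain ⟨x, rfl⟩ := Ideal.Quotient.mk_surjective r
  obtain ⟨c, t, rfl⟩ := IsLocalization.exists_mk'_eq S x
  have hmem : IsLocalization.mk' (Localization S) (c * b) t ∈
      J.map (algebraMap B (Localization S)) := by
    rw [mul_comm, ← IsLocalization.mul_mk'_eq_mk'_of_mul, mul_comm]
    exact Ideal.Quotient.eq_zero_iff_mem.mp h
  obtain ⟨s, hs, hscb⟩ := (IsLocalization.mk'_mem_map_algebraMap_iff S _ J _ t).mp hmem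
  rw [← mul_assoc] at hscb
  refine ⟨s * c, fun hsc => hr ?_, hscb⟩
  have hsc : algebraMap B (LocalizationQuotient S J) (s * c) ∈ p :=
    (Ideal.mem_of_liesOver p Q _).mp hsc
  rw [map_mul, IsScalarTower.algebraMap_apply B (Localization S) (LocalizationQuotient S J),
    Ideal.unit_mul_mem_iff_mem _ ((IsLocalization.map_units _ (⟨s, hs⟩ : S)).map _)] at hsc
  rw [IsLocalization.mk'_eq_mul_mk'_one, map_mul]
  exact p.mul_mem_right _ hsc

variable (Q : Ideal B) [Q.IsPrime] (p : Ideal (LocalizationQuotient S J)) [p.IsPrime] [p.LiesOver Q]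

attribute [local instance] Localization.AtPrime.algebraOfLiesOver

lemma algebraMap_atPrime_localizationQuotient_surjective :
    Function.Surjective (algebraMap (Localization.AtPrime Q) (Localization.AtPrime p)) := by
  refine RingHom.SurjectiveOnStalks.localRingHom_surjective ?_ Q p Ideal.LiesOver.over
  rw [IsScalarTower.algebraMap_eq B (Localization S) (LocalizationQuotient S J)]
  exact (RingHom.surjectiveOnStalks_of_surjective Ideal.Quotient.mk_surjective).comp
    (RingHom.surjectiveOnStalks_of_isLocalization (M := S) (Localization S))

lemma ker_algebraMap_atPrime_localizationQuotient :
    RingHom.ker (algebraMap (Localization.AtPrime Q) (Localization.AtPrime p)) =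
      J.map (algebraMap B (Localization.AtPrime Q)) := by
  refine le_antisymm (fun x hx => ?_) (Ideal.map_le_iff_le_comap.mpr fun b hb => ?_)
  · obtain ⟨b, s, rfl⟩ := IsLocalization.exists_mk'_eq Q.primeCompl x
    have hb : algebraMap B (Localization.AtPrime p) b = 0 := by
      rw [IsScalarTower.algebraMap_apply B (Localization.AtPrime Q),
        ← IsLocalization.mk'_spec (Localization.AtPrime Q) b s, map_mul, RingHom.mem_ker.mp hx,
        zero_mul]
    rw [IsScalarTower.algebraMap_apply B (LocalizationQuotient S J),
      IsLocalization.map_eq_zero_iff p.primeCompl] at hb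
    obtain ⟨r, hr⟩ := hb
    exact (IsLocalization.mk'_mem_map_algebraMap_iff Q.primeCompl _ J b s).mpr
      (exists_mul_mem_of_mul_algebraMap_eq_zero r.2 hr)
  · have hb : algebraMap B (LocalizationQuotient S J) b = 0 :=
      Ideal.Quotient.eq_zero_iff_mem.mpr (Ideal.mem_map_of_mem _ hb)
    rw [Ideal.mem_comap, RingHom.mem_ker, ← IsScalarTower.algebraMap_apply,
      IsScalarTower.algebraMap_apply B (LocalizationQuotient S J), hb, map_zero]

end LocalizationQuotient

section FiberModule

attribute [local instance] tensorLeftModule tensorModule Localization.AtPrime.algebraOfLiesOver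

/-- Reduction modulo the kernel of a surjection, as a base change. -/
def quotientKerSMulTopEquiv {R T : Type*} [CommRing R] [CommRing T] [Algebra R T]
    (h : Function.Surjective (algebraMap R T)) (X : Type*) [AddCommGroup X] [Module R X] :
    (X ⧸ (RingHom.ker (algebraMap R T) • ⊤ : Submodule R X)) ≃ₗ[R] T ⊗[R] X :=
  (quotTensorEquivQuotSMul X _).symm ≪≫ₗ TensorProduct.congr
    (LinearMap.quotKerEquivOfSurjective (Algebra.linearMap R T) h) (.refl R X)

variable {B : Type u} [CommRing B] {S : Submonoid B} {J : Ideal B}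

/-- The localization of `S⁻¹N / J S⁻¹N` at a prime, as a base change of `N`. -/
def localizedModuleQuotientEquiv (I : Ideal (Localization S)) (N : Type u) [AddCommGroup N]
    [Module B N] (p : Ideal (Localization S ⧸ I)) [p.IsPrime] :
    LocalizedModule p.primeCompl
      (LocalizedModule S N ⧸ (I • ⊤ : Submodule (Localization S) (LocalizedModule S N)))
      ≃ₗ[Localization.AtPrime p] Localization.AtPrime p ⊗[B] N :=
  let X := LocalizedModule S N ⧸ (I • ⊤ : Submodule (Localization S) (LocalizedModule S N))
  let quotientEquiv : X ≃ₗ[Localization S ⧸ I] (Localization S ⧸ I) ⊗[B] N :=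
    (quotTensorEquivQuotSMul (LocalizedModule S N) I).symm.extendScalarsOfSurjective
        Ideal.Quotient.mk_surjective ≪≫ₗ
      AlgebraTensorModule.congr (.refl _ _) (LocalizedModule.equivTensorProduct S N) ≪≫ₗ
        AlgebraTensorModule.cancelBaseChange B (Localization S) (Localization S ⧸ I) _ N
  LocalizedModule.equivTensorProduct p.primeCompl X ≪≫ₗ
    AlgebraTensorModule.congr (.refl _ _) quotientEquiv ≪≫ₗ
      AlgebraTensorModule.cancelBaseChange B (Localization S ⧸ I) (Localization.AtPrime p) _ N

lemma IsAlmostCMModule.cmDefectLE_one_of_surjective {R : Type u} [CommRing R] [IsNoetherianRing R]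
    {X : Type u} [AddCommGroup X] [Module R X] [Module.Finite R X] (h : IsAlmostCMModule R X)
    (p : Ideal R) [p.IsPrime] {B' : Type*} [CommRing B'] [IsLocalRing B']
    [Algebra B' (Localization.AtPrime p)]
    (hsurj : Function.Surjective (algebraMap B' (Localization.AtPrime p)))
    (Y : Type*) [AddCommGroup Y] [Module B' Y]
    (e : LocalizedModule p.primeCompl X ≃ₗ[Localization.AtPrime p] Localization.AtPrime p ⊗[B'] Y) :
    CMDefectLE B' 1 (Y ⧸ (RingHom.ker (algebraMap B' (Localization.AtPrime p)) • ⊤ :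
      Submodule B' Y)) := by
  rw [cmDefectLE_congr (quotientKerSMulTopEquiv hsurj Y)]
  exact ((cmDefectLE_congr e).mp (h.cmDefectLE_one ⟨p, ‹_›⟩)).of_surjective hsurj

lemma IsAlmostCMModule.cmDefectLE_one_of_localizationQuotient [IsNoetherianRing B] {N : Type u}
    [AddCommGroup N] [Module B N] [Module.Finite B N]
    (h : IsAlmostCMModule (LocalizationQuotient S J)
      (LocalizedModule S N ⧸ (J.map (algebraMap B (Localization S)) • ⊤ :
        Submodule (Localization S) (LocalizedModule S N))))
    {Q : Ideal B} [Q.IsPrime] (hS : S ≤ Q.primeCompl) (hJ : J ≤ Q) :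
    CMDefectLE (Localization.AtPrime Q) 1 ((Localization.AtPrime Q ⊗[B] N) ⧸
      (J.map (algebraMap B (Localization.AtPrime Q)) • ⊤ :
        Submodule (Localization.AtPrime Q) (Localization.AtPrime Q ⊗[B] N))) := by
  obtain ⟨p, _, _⟩ := exists_isPrime_liesOver_of_le hS hJ
  have : Module.Finite (LocalizationQuotient S J)
      (LocalizedModule S N ⧸ (J.map (algebraMap B (Localization S)) • ⊤ :
        Submodule (Localization S) (LocalizedModule S N))) :=
    .of_restrictScalars_finite (Localization S) _ _
  rw [← ker_algebraMap_atPrime_localizationQuotient Q p]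
  exact h.cmDefectLE_one_of_surjective p (algebraMap_atPrime_localizationQuotient_surjective Q p) _
    (localizedModuleQuotientEquiv _ N p ≪≫ₗ
      (AlgebraTensorModule.cancelBaseChange B (Localization.AtPrime Q) (Localization.AtPrime p)
        (Localization.AtPrime p) N).symm)

end FiberModule

section BaseChange

open IsLocalRing

attribute [local instance] tensorLeftModule tensorModule

variable {A B : Type u} [CommRing A] [CommRing B] [Algebra A B]
  {N : Type u} [AddCommGroup N] [Module A N] [Module B N] [IsScalarTower A B N]

lemma flat_of_isLocalizedModule_of_tower (S : Submonoid B) {N' : Type*} [AddCommGroup N']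
    [Module A N'] [Module B N'] [IsScalarTower A B N'] (f : N →ₗ[B] N') [IsLocalizedModule S f]
    [Module.Flat A N] : Module.Flat A N' := by
  have hN : Module.Flat A N := inferInstance
  simp_rw [Module.Flat.iff_lTensor_injectiveₛ, ← AlgebraTensorModule.coe_lTensor (A := B)] at hN ⊢
  intro P _ _ L
  rw [← IsLocalizedModule.map_lTensor (S := S) (g := f)]
  exact IsLocalizedModule.map_injective S _ _ _ (hN L)

variable {A' B' : Type u} [CommRing A'] [CommRing B'] [Algebra A A'] [Algebra B B'] [Algebra A' B']
  [Algebra A B'] [IsScalarTower A B B'] [IsScalarTower A A' B']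
  {M : Type u} [AddCommGroup M] [Module A M]

/-- Base change of a tensor product along a commutative square of rings. -/
def baseChangeTensorProductEquiv :
    (B' ⊗[B] (N ⊗[A] M)) ≃ₗ[B'] ((B' ⊗[B] N) ⊗[A'] (A' ⊗[A] M)) :=
  (AlgebraTensorModule.assoc A B B' B' N M).symm ≪≫ₗ
    (AlgebraTensorModule.cancelBaseChange A A' B' (B' ⊗[B] N) M).symm

lemma CMDefectLE.baseChange_tensorProduct [IsLocalRing A'] [IsNoetherianRing A'] [IsLocalRing B']
    [IsNoetherianRing B'] [IsLocalHom (algebraMap A' B')] [Module.Finite A M] [Module.Finite B N]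
    [Module.Flat A' (B' ⊗[B] N)] {n : ℕ} (hM : CMDefectLE A' 0 (A' ⊗[A] M))
    (hN : CMDefectLE B' n ((B' ⊗[B] N) ⧸
      ((maximalIdeal A').map (algebraMap A' B') • ⊤ : Submodule B' (B' ⊗[B] N)))) :
    CMDefectLE B' n (B' ⊗[B] (N ⊗[A] M)) :=
  (cmDefectLE_congr (baseChangeTensorProductEquiv (A' := A'))).mpr (hM.tensorProduct hN)

end BaseChange

section Fiber

open IsLocalRing

attribute [local instance] tensorLeftModule tensorModule Localization.AtPrime.algebraOfLiesOver

variable {A B : Type u} [CommRing A] [CommRing B] [IsNoetherianRing B] [Algebra A B]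
  {M : Type u} [AddCommGroup M] [Module A M]
  {N : Type u} [AddCommGroup N] [Module B N] [Module.Finite B N]

lemma IsAlmostCMModule.cmDefectLE_one_of_fiberModule {P : PrimeSpectrum A} {Q : PrimeSpectrum B}
    [Q.asIdeal.LiesOver P.asIdeal]
    (h : IsAlmostCMModule (fiberRing A B P) (fiberModule A B P N)) :
    CMDefectLE (Localization.AtPrime Q.asIdeal) 1 ((Localization.AtPrime Q.asIdeal ⊗[B] N) ⧸
      ((maximalIdeal (Localization.AtPrime P.asIdeal)).map
        (algebraMap _ (Localization.AtPrime Q.asIdeal)) • ⊤ :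
          Submodule (Localization.AtPrime Q.asIdeal) (Localization.AtPrime Q.asIdeal ⊗[B] N))) := by
  have hmax : (maximalIdeal (Localization.AtPrime P.asIdeal)).map
      (algebraMap _ (Localization.AtPrime Q.asIdeal)) =
        (P.asIdeal.map (algebraMap A B)).map (algebraMap B (Localization.AtPrime Q.asIdeal)) := by
    rw [← Localization.AtPrime.map_eq_maximalIdeal, Ideal.map_map, Ideal.map_map,
      ← IsScalarTower.algebraMap_eq, ← IsScalarTower.algebraMap_eq]
  have hfiber : fiberIdeal A B P = (P.asIdeal.map (algebraMap A B)).map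
      (algebraMap B (Localization (fiberSubmonoid A B P))) := (Ideal.map_map _ _).symm
  have hS : fiberSubmonoid A B P ≤ Q.asIdeal.primeCompl := by
    rintro _ ⟨a, ha, rfl⟩
    exact fun hmem => ha ((Ideal.mem_of_liesOver Q.asIdeal P.asIdeal a).mpr hmem)
  change IsAlmostCMModule (Localization (fiberSubmonoid A B P) ⧸ fiberIdeal A B P)
    (LocalizedModule (fiberSubmonoid A B P) N ⧸ (fiberIdeal A B P • ⊤ : Submodule
      (Localization (fiberSubmonoid A B P)) (LocalizedModule (fiberSubmonoid A B P) N))) at h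
  rw [hfiber] at h
  rw [hmax]
  exact h.cmDefectLE_one_of_localizationQuotient hS
    (Ideal.map_le_iff_le_comap.mpr (Ideal.LiesOver.over (p := P.asIdeal)).le)

variable [IsNoetherianRing A] [Module.Finite A M] [Module A N] [IsScalarTower A B N]
  [Module.Flat A N]

lemma cmDefectLE_one_localizedModule_tensorProduct (hM : IsCMModule A M)
    (hfib : ∀ P ∈ Module.support A M, IsAlmostCMModule (fiberRing A B P) (fiberModule A B P N))
    (Q : PrimeSpectrum B) : CMDefectLE (Localization.AtPrime Q.asIdeal) 1
      (LocalizedModule Q.asIdeal.primeCompl (N ⊗[A] M)) := by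
  by_cases hQ : Q ∈ Module.support B (N ⊗[A] M)
  · let P : PrimeSpectrum A := Q.comap (algebraMap A B)
    have : Q.asIdeal.LiesOver P.asIdeal := ⟨rfl⟩
    have : IsLocalHom (algebraMap (Localization.AtPrime P.asIdeal)
        (Localization.AtPrime Q.asIdeal)) :=
      Localization.isLocalHom_localRingHom P.asIdeal Q.asIdeal (algebraMap A B) rfl
    have : Module.Flat (Localization.AtPrime P.asIdeal) (Localization.AtPrime Q.asIdeal ⊗[B] N) :=
      (Module.flat_iff_of_isLocalization _ P.asIdeal.primeCompl _).mpr
        (flat_of_isLocalizedModule_of_tower Q.asIdeal.primeCompl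
          (TensorProduct.mk B (Localization.AtPrime Q.asIdeal) N 1))
    refine (cmDefectLE_congr (LocalizedModule.equivTensorProduct _ _)).mpr
      (CMDefectLE.baseChange_tensorProduct (A' := Localization.AtPrime P.asIdeal) ?_ ?_)
    · exact (cmDefectLE_congr (LocalizedModule.equivTensorProduct _ _)).mp (hM.cmDefectLE_zero P)
    · exact (hfib P
        (comap_mem_support_right_of_mem_support_tensorProduct hQ)).cmDefectLE_one_of_fiberModule
  · have := Module.notMem_support_iff.mp hQ
    exact .of_subsingleton 1 _

end Fiber

section Swap

variable {A B : Type u} [CommRing A] [CommRing B] [Algebra A B]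
  (M : Type u) [AddCommGroup M] [Module A M]
  (N : Type u) [AddCommGroup N] [Module A N] [Module B N] [IsScalarTower A B N]

variable (A B) in
/-- The swap of tensor factors, from the module structure `tensorRightModule` to Mathlib's
structure through the left factor. -/
def tensorRightModuleEquiv : M ⊗[A] N ≃ₗ[B] N ⊗[A] M where
  __ := TensorProduct.comm A M N
  map_smul' b x := (TensorProduct.comm A M N).apply_symm_apply (b • TensorProduct.comm A M N x)

lemma isAlmostCMModule_congr {R : Type u} [CommRing R] {F G : Type*} [AddCommGroup F] [Module R F]
    [AddCommGroup G] [Module R G] (e : F ≃ₗ[R] G) :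
    IsAlmostCMModule R F ↔ IsAlmostCMModule R G := by
  have depthAt_congr (P : PrimeSpectrum R) : depthAt R F P = depthAt R G P :=
    localDepth_congr (IsLocalizedModule.mapEquiv P.asIdeal.primeCompl
      (LocalizedModule.mkLinearMap P.asIdeal.primeCompl F)
      (LocalizedModule.mkLinearMap P.asIdeal.primeCompl G) (Localization.AtPrime P.asIdeal) e)
  simp only [IsAlmostCMModule, e.support_eq, idealDepth_congr e, depthAt_congr]

end Swap

theorem tensor_almostCM_of_CM_base_almostCM_fibers (A B : Type u) [CommRing A] [CommRing B] [IsNoetherianRing A] [IsNoetherianRing B]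
    [Algebra A B]
    (M : Type u) [AddCommGroup M] [Module A M] [Module.Finite A M]
    (N : Type u) [AddCommGroup N] [Module A N] [Module B N] [IsScalarTower A B N]
    [Module.Finite B N] [Module.Flat A N]
    (hM : IsCMModule A M)
    (hfib : ∀ P ∈ Module.support A M, IsAlmostCMModule (fiberRing A B P) (fiberModule A B P N)) :
    IsAlmostCMModule B (M ⊗[A] N) := by
  have : Module.Finite B (N ⊗[A] M) := finite_tensorProduct_left M
  exact (isAlmostCMModule_congr (tensorRightModuleEquiv A B M N)).mpr <|
    isAlmostCMModule_of_cmDefectLE (cmDefectLE_one_localizedModule_tensorProduct hM hfib)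

end
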